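/- For every θ ∈ ℝ, at least one of the following holds: for all odd k ≥ 1 the word t_k^θ = v_θ(−F_k + 1) v_θ(−F_k + 2) ... v_θ(0) is a cyclic rotation of s_k, or for all even k ≥ 0 the word t_k^θ is a cyclic rotation of s_k. -/

import Mathlib

/-- The Fibonacci substitution `S` on the alphabet `{0,1}` (encoded as `Bool`,
with `false` for `0` and `true` for `1`): `S(0) = 1`, `S(1) = 10`. -/
def fibS : Bool → List Bool
  | false => [true]
  | true => [true, false]

/-- The Fibonacci words `s_k = S^k(1)`; the word `s_k` has length `F_k = Nat.fib (k + 2)`. -/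
def fibWord : ℕ → List Bool
  | 0 => [true]
  | k + 1 => (fibWord k).flatMap fibS

/-- `ω = (√5 - 1)/2`, the inverse of the golden mean. -/
noncomputable def goldenOmega : ℝ := (Real.sqrt 5 - 1) / 2

/-- The Fibonacci potential sequence: `v_θ(n) = 1` if the fractional part of `nω + θ`
lies in `[1 - ω, 1)`, and `0` otherwise (letters encoded as `Bool`). -/
noncomputable def vTheta (θ : ℝ) (n : ℤ) : Bool :=
  if Int.fract ((n : ℝ) * goldenOmega + θ) ∈ Set.Ico (1 - goldenOmega) 1 then true else false

/-- The word `t_k^θ = v_θ(-F_k + 1) v_θ(-F_k + 2) ... v_θ(0)`. -/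
noncomputable def tTheta (θ : ℝ) (k : ℕ) : List Bool :=
  (List.range (Nat.fib (k + 2))).map fun i => vTheta θ (-(Nat.fib (k + 2) : ℤ) + 1 + (i : ℤ))

lemma om_sq : goldenOmega ^ 2 = 1 - goldenOmega := by
  have h : Real.sqrt 5 ^ 2 = 5 := Real.sq_sqrt (by norm_num)
  unfold goldenOmega
  linear_combination h / 4

lemma om_bounds : 0.618 < goldenOmega ∧ goldenOmega < 0.6181 := by
  have h1 : (2.236 : ℝ) < Real.sqrt 5 := Real.lt_sqrt_of_sq_lt (by norm_num)
  have h2 : Real.sqrt 5 < 2.2362 := by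
    rw [Real.sqrt_lt' (by norm_num)]; norm_num
  unfold goldenOmega
  constructor <;> linarith

lemma fib_om (n : ℕ) : (Nat.fib (n + 1) : ℝ) * goldenOmega = Nat.fib n - (-goldenOmega) ^ (n + 1) := by
  induction n with
  | zero => simp
  | succ n ih =>
    have h : Nat.fib (n + 1 + 1) = Nat.fib n + Nat.fib (n + 1) := Nat.fib_add_two
    rw [h, pow_succ]
    push_cast
    linear_combination (-goldenOmega) * ih + (Nat.fib (n + 1) : ℝ) * om_sq

/-- `fib n * ω^n * √5 = 1 - (-ω²)^n`, with `√5 = 2ω+1`. -/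
lemma fib_pow (n : ℕ) : (Nat.fib n : ℝ) * (2 * goldenOmega + 1) * goldenOmega ^ n
    = 1 - (-goldenOmega ^ 2) ^ n := by
  have key : ∀ n : ℕ, (Nat.fib n : ℝ) * (2 * goldenOmega + 1) * goldenOmega ^ n
      = 1 - (-goldenOmega ^ 2) ^ n ∧ (Nat.fib (n+1) : ℝ) * (2 * goldenOmega + 1) * goldenOmega ^ (n+1)
      = 1 - (-goldenOmega ^ 2) ^ (n+1) := by
    intro n
    induction n with
    | zero =>
      have := om_sq
      simp
      linear_combination om_sq
    | succ n ih =>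
      refine ⟨ih.2, ?_⟩
      have h : Nat.fib (n + 1 + 1) = Nat.fib n + Nat.fib (n + 1) := Nat.fib_add_two
      have e1 := ih.1
      have e2 := ih.2
      rw [h]
      push_cast
      generalize hX : (-goldenOmega ^ 2) ^ n = X at *
      have hX1 : (-goldenOmega ^ 2) ^ (n+1) = X * (-goldenOmega ^ 2) := by rw [pow_succ, hX]
      have hX2 : (-goldenOmega ^ 2) ^ (n+1+1) = X * (-goldenOmega ^ 2) * (-goldenOmega ^ 2) := by
        rw [pow_succ, hX1]
      rw [hX1] at e2
      rw [hX2]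
      have o := om_sq
      linear_combination goldenOmega ^ 2 * e1 + goldenOmega * e2 + (1 - X * (-goldenOmega^2) ) * o
  exact (key n).1

lemma om_pow_le (n : ℕ) : goldenOmega ^ (n + 3) ≤ 0.2363 := by
  have hb := om_bounds
  have h3 : goldenOmega ^ (n + 3) ≤ goldenOmega ^ 3 :=
    pow_le_pow_of_le_one (by linarith) (by linarith) (by omega)
  have : goldenOmega ^ 3 = 2 * goldenOmega - 1 := by
    linear_combination (goldenOmega - 1) * om_sq
  linarith

lemma fib_pow_lt (n : ℕ) : (Nat.fib (n + 3) : ℝ) * goldenOmega ^ (n + 3) < 1 / 2 := by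
  have hb := om_bounds
  have h := fib_pow (n + 3)
  have hp : 0 < goldenOmega ^ (n + 3) := pow_pos (by linarith) _
  have h3 := om_pow_le n
  have h4 : -(goldenOmega ^ (n + 3)) ^ 2 ≤ (-goldenOmega ^ 2) ^ (n + 3) := by
    have : |(-goldenOmega ^ 2) ^ (n + 3)| = (goldenOmega ^ (n + 3)) ^ 2 := by
      rw [abs_pow, abs_neg, abs_of_nonneg (sq_nonneg _), ← pow_mul, ← pow_mul, mul_comm]
    rw [← this]; exact neg_abs_le _
  nlinarith

lemma vTheta_iff (θ : ℝ) (n : ℤ) : vTheta θ n =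
    decide (⌊((n : ℝ) + 1) * goldenOmega + θ⌋ = ⌊(n : ℝ) * goldenOmega + θ⌋ + 1) := by
  have hb := om_bounds
  unfold vTheta
  set z := (n : ℝ) * goldenOmega + θ with hz
  have e : ((n : ℝ) + 1) * goldenOmega + θ = z + goldenOmega := by rw [hz]; ring
  rw [e]
  have h1 := Int.floor_add_fract z
  have h2 := Int.fract_lt_one z
  have h3 := Int.fract_nonneg z
  have : Int.fract z ∈ Set.Ico (1 - goldenOmega) 1 ↔ ⌊z + goldenOmega⌋ = ⌊z⌋ + 1 := by
    rw [Int.floor_eq_iff, Set.mem_Ico]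
    push_cast
    constructor
    · rintro ⟨a, b⟩; constructor <;> linarith
    · rintro ⟨a, b⟩; constructor <;> linarith
  by_cases h : Int.fract z ∈ Set.Ico (1 - goldenOmega) 1
  · rw [if_pos h]; simp [this.1 h]
  · rw [if_neg h]; symm; rw [decide_eq_false_iff_not]; exact fun h' => h (this.2 h')

lemma vTheta_iff' (θ : ℝ) (n : ℤ) (z z' : ℝ) (h : (n : ℝ) * goldenOmega + θ = z)
    (hz : ((n : ℝ) + 1) * goldenOmega + θ = z') :
    vTheta θ n = decide (⌊z'⌋ = ⌊z⌋ + 1) := by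
  rw [vTheta_iff, h, hz]

/-- Floor of a small perturbation of a non-integer rational. -/
lemma floor_pert (a q : ℤ) (hq : 0 < q) (hr : ¬ q ∣ a) (t : ℝ) (h : |q * t - a| < 1) :
    ⌊t⌋ = a / q := by
  have hm := Int.emod_add_mul_ediv a q
  have h0 : 0 ≤ a % q := Int.emod_nonneg _ hq.ne'
  have h1 : a % q < q := Int.emod_lt_of_pos _ hq
  have h2 : a % q ≠ 0 := fun h => hr (Int.dvd_of_emod_eq_zero h)
  have g1 : (1 : ℝ) ≤ ((a % q : ℤ) : ℝ) := by exact_mod_cast (by omega : 1 ≤ a % q)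
  have g2 : ((a % q : ℤ) : ℝ) + 1 ≤ q := by exact_mod_cast (by omega : a % q + 1 ≤ q)
  have g3 : ((a % q : ℤ) : ℝ) + q * ((a / q : ℤ) : ℝ) = a := by exact_mod_cast hm
  have hq' : (0 : ℝ) < q := by exact_mod_cast hq
  rw [abs_lt] at h
  rw [Int.floor_eq_iff]
  constructor
  · by_contra hc
    push Not at hc
    nlinarith
  · by_contra hc
    push Not at hc
    nlinarith

lemma floor_shift (k i : ℕ) (hi : 1 ≤ i) (hi2 : i ≤ Nat.fib (k + 3)) :
    ⌊((i : ℝ) + Nat.fib (k + 3)) * goldenOmega⌋ = Nat.fib (k + 2) + ⌊(i : ℝ) * goldenOmega⌋ := by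
  have hb := om_bounds
  have hf := fib_om (k + 2)
  set d : ℝ := - (-goldenOmega) ^ (k + 3) with hd
  have hf' : (Nat.fib (k + 3) : ℝ) * goldenOmega = Nat.fib (k + 2) + d := by
    rw [hf]; ring
  have hd1 : |d| = goldenOmega ^ (k + 3) := by
    rw [hd, abs_neg, abs_pow, abs_neg, abs_of_pos (by linarith)]
  have hp : 0 < goldenOmega ^ (k + 3) := pow_pos (by linarith) _
  have h3 := om_pow_le k
  have h4 := fib_pow_lt k
  rw [← hd1] at hp h3 h4
  have e : ((i : ℝ) + Nat.fib (k + 3)) * goldenOmega = ((Nat.fib (k+2) : ℤ) : ℝ) + (i * goldenOmega + d) := by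
    push_cast; linear_combination hf'
  rw [e, Int.floor_intCast_add]
  congr 1
  rcases hi2.lt_or_eq with hlt | heq
  · have hQ : 0 < Nat.fib (k + 3) := by omega
    have hcop : Nat.Coprime (Nat.fib (k + 2)) (Nat.fib (k + 3)) := Nat.fib_coprime_fib_succ _
    have hnd : ¬ ((Nat.fib (k + 3) : ℤ) ∣ ((i * Nat.fib (k + 2) : ℕ) : ℤ)) := by
      intro h
      have h' := Int.natCast_dvd_natCast.1 h
      have := Nat.le_of_dvd hi (hcop.symm.dvd_of_dvd_mul_right h')
      omega
    have hiQ : (i : ℝ) ≤ Nat.fib (k + 3) := by exact_mod_cast hi2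
    have hi0 : (0 : ℝ) ≤ i := by positivity
    have hid : |(i : ℝ) * d| < 1 / 2 := by
      rw [abs_mul, abs_of_nonneg hi0]; nlinarith
    have hQd : |(Nat.fib (k + 3) : ℝ) * d| < 1 / 2 := by
      rw [abs_mul, abs_of_nonneg (by positivity)]; exact h4
    rw [floor_pert _ _ (by exact_mod_cast hQ) hnd, floor_pert _ _ (by exact_mod_cast hQ) hnd]
    · have : ((Nat.fib (k+3) : ℤ) : ℝ) * (i * goldenOmega) - ((i * Nat.fib (k + 2) : ℕ) : ℤ) = i * d := by
        push_cast; linear_combination i * hf'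
      rw [this]; linarith
    · have : ((Nat.fib (k+3) : ℤ) : ℝ) * (i * goldenOmega + d) - ((i * Nat.fib (k + 2) : ℕ) : ℤ) = i * d + Nat.fib (k+3) * d := by
        push_cast; linear_combination i * hf'
      rw [this]
      exact (abs_add_le _ _).trans_lt (by linarith)
  · rw [heq, hf']
    have e2 : (Nat.fib (k + 2) : ℝ) + d + d = ((Nat.fib (k+2) : ℤ) : ℝ) + (2 * d) := by push_cast; ring
    have e3 : (Nat.fib (k + 2) : ℝ) + d = ((Nat.fib (k+2) : ℤ) : ℝ) + d := by push_cast; ring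
    rw [e2, e3, Int.floor_intCast_add, Int.floor_intCast_add]
    congr 1
    rcases le_or_gt 0 d with h | h
    · rw [abs_of_nonneg h] at *
      rw [(Int.floor_eq_iff (z := 0)).2, (Int.floor_eq_iff (z := 0)).2] <;> push_cast <;> constructor <;> linarith
    · rw [abs_of_neg h] at *
      rw [(Int.floor_eq_iff (z := -1)).2, (Int.floor_eq_iff (z := -1)).2] <;> push_cast <;> constructor <;> linarith

lemma fibWord_rec (k : ℕ) : fibWord (k + 2) = fibWord (k + 1) ++ fibWord k := by
  induction k with
  | zero => rfl
  | succ k ih =>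
    calc fibWord (k + 1 + 2) = (fibWord (k + 2)).flatMap fibS := rfl
      _ = (fibWord (k + 1)).flatMap fibS ++ (fibWord k).flatMap fibS := by
        rw [ih, List.flatMap_append]
      _ = _ := rfl

lemma vshift (k i : ℕ) (hi : i < Nat.fib (k + 2)) :
    vTheta 0 ((Nat.fib (k + 3) + i : ℕ) + 1 : ℤ) = vTheta 0 ((i : ℤ) + 1) := by
  have hF : Nat.fib (k + 2) + 1 ≤ Nat.fib (k + 3) := by
    have : Nat.fib (k + 3) = Nat.fib (k + 1) + Nat.fib (k + 2) := Nat.fib_add_two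
    have : 0 < Nat.fib (k + 1) := Nat.fib_pos.2 (by omega)
    omega
  have a1 := floor_shift k (i + 1) (by omega) (by omega)
  have a2 := floor_shift k (i + 2) (by omega) (by omega)
  rw [vTheta_iff, vTheta_iff]
  push_cast at a1 a2 ⊢
  have e1 : ((Nat.fib (k+3) : ℝ) + i + 1 + 1) * goldenOmega + 0 = ((i : ℝ) + 2 + Nat.fib (k+3)) * goldenOmega := by ring
  have e2 : ((Nat.fib (k+3) : ℝ) + i + 1) * goldenOmega + 0 = ((i : ℝ) + 1 + Nat.fib (k+3)) * goldenOmega := by ring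
  have e3 : ((i : ℝ) + 1 + 1) * goldenOmega + 0 = ((i : ℝ) + 2) * goldenOmega := by ring
  rw [e1, e2, a1, a2, e3, add_zero]
  congr 1
  apply propext
  constructor <;> intro h <;> linarith

lemma fibWord_eq (k : ℕ) : fibWord k = (List.range (Nat.fib (k + 2))).map
    fun i : ℕ => vTheta 0 ((i : ℤ) + 1) := by
  have hb := om_bounds
  have hs := om_sq
  have f1 : ⌊(((1 : ℤ) : ℝ) + 1) * goldenOmega + 0⌋ = 1 := by
    rw [Int.floor_eq_iff]; push_cast; constructor <;> linarith
  have f2 : ⌊((1 : ℤ) : ℝ) * goldenOmega + 0⌋ = 0 := by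
    rw [Int.floor_eq_iff]; push_cast; constructor <;> linarith
  have f3 : ⌊(((2 : ℤ) : ℝ) + 1) * goldenOmega + 0⌋ = 1 := by
    rw [Int.floor_eq_iff]; push_cast; constructor <;> linarith
  have f4 : ⌊((2 : ℤ) : ℝ) * goldenOmega + 0⌋ = 1 := by
    rw [Int.floor_eq_iff]; push_cast; constructor <;> linarith
  have v1 : vTheta 0 1 = true := by
    rw [vTheta_iff, f1, f2]; rfl
  have v2 : vTheta 0 2 = false := by
    rw [vTheta_iff, f3, f4]; rfl
  induction k using Nat.twoStepInduction with
  | zero => simp [fibWord, v1]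
  | one =>
    have : Nat.fib (1 + 2) = 2 := rfl
    rw [this]
    simp [fibWord, fibS, List.range_succ, v1, v2]
  | more k h1 h2 =>
    have : Nat.fib (k + 2 + 2) = Nat.fib (k + 3) + Nat.fib (k + 2) := by
      rw [add_comm (Nat.fib (k + 3))]; exact Nat.fib_add_two
    rw [fibWord_rec, this, List.range_add, List.map_append, h1, h2]
    congr 1
    rw [List.map_map]
    apply List.map_congr_left
    intro i hi
    exact (vshift k i (List.mem_range.1 hi)).symm

lemma exists_mech (y w : ℝ) (p q : ℕ) (hq : 0 < q) (hc : Nat.Coprime p q)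
    (hw : q * |q * w - p| < 1) (hy : ⌊y + q * w⌋ = ⌊y⌋ + p) :
    ∃ c : ℤ, ∀ i : ℕ, i ≤ q → ⌊y + i * w⌋ = (c + i * p) / q := by
  obtain ⟨m, hm, hmax⟩ := Finset.exists_max_image (Finset.range q)
    (fun i : ℕ => (q : ℤ) * ⌊y + i * w⌋ - i * p) ⟨0, by simpa using hq⟩
  have key : ∀ i < q, ∀ j < q, (q : ℤ) * ⌊y + i * w⌋ - i * p < q * ⌊y + j * w⌋ - j * p + q := by
    intro i hi j hj
    by_contra hcon
    push Not at hcon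
    set a := ⌊y + i * w⌋ with ha
    set b := ⌊y + j * w⌋ with hb
    have h1 : (a : ℝ) ≤ y + i * w := Int.floor_le _
    have h2 : y + j * w < b + 1 := Int.lt_floor_add_one _
    have h3 : (a - b - 1 : ℝ) < (i - j) * w := by linarith
    have hq' : (0 : ℝ) < q := by exact_mod_cast hq
    by_cases hij : i = j
    · subst hij
      have : a = b := rfl
      rw [this] at hcon
      omega
    have hne : (q : ℤ) * (a - b - 1) ≠ (i - j) * p := by
      intro h
      have hd : (q : ℤ) ∣ (i - j) * p := ⟨_, h.symm⟩
      have hcz : IsCoprime (q : ℤ) (p : ℤ) := Nat.isCoprime_iff_coprime.2 hc.symm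
      have hd2 := hcz.dvd_of_dvd_mul_right hd
      have := Int.eq_zero_of_abs_lt_dvd hd2 (by rw [abs_lt]; constructor <;> omega)
      omega
    have hge : (i - j : ℤ) * p + 1 ≤ q * (a - b - 1) := by
      have : (i - j : ℤ) * p ≤ q * (a - b - 1) := by linarith
      omega
    have hge' : ((i : ℝ) - j) * p + 1 ≤ q * (a - b - 1) := by exact_mod_cast hge
    have h4 : (q : ℝ) * (a - b - 1) < q * ((i - j) * w) := mul_lt_mul_of_pos_left h3 hq'
    have h5 : 1 < ((i : ℝ) - j) * (q * w - p) := by linarith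
    have h6 : ((i : ℝ) - j) * (q * w - p) ≤ |(i : ℝ) - j| * |q * w - p| := by
      rw [← abs_mul]; exact le_abs_self _
    have h7 : |(i : ℝ) - j| ≤ q := by
      have hi' : (i : ℝ) < q := by exact_mod_cast hi
      have hj' : (j : ℝ) < q := by exact_mod_cast hj
      have hi0 : (0 : ℝ) ≤ i := by positivity
      have hj0 : (0 : ℝ) ≤ j := by positivity
      rw [abs_le]; constructor <;> linarith
    have h8 := mul_le_mul_of_nonneg_right h7 (abs_nonneg ((q : ℝ) * w - p))
    linarith
  refine ⟨(q : ℤ) * ⌊y + m * w⌋ - m * p, ?_⟩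
  have hqz : (0 : ℤ) < q := by exact_mod_cast hq
  have main : ∀ i < q, ⌊y + i * w⌋ = ((q : ℤ) * ⌊y + m * w⌋ - m * p + i * p) / q := by
    intro i hi
    have k1 := key m (Finset.mem_range.1 hm) i hi
    have k2 := hmax i (Finset.mem_range.2 hi)
    symm
    rw [Int.ediv_eq_iff_of_pos hqz]
    constructor <;> linarith
  intro i hi
  rcases hi.lt_or_eq with h | h
  · exact main i h
  · subst h
    have := main 0 hq
    push_cast at this
    rw [zero_mul, zero_mul, add_zero, add_zero] at this
    rw [hy, this, Int.add_mul_ediv_left _ _ hqz.ne']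

def mechLetter (p q : ℕ) (z : ℤ) : Bool := decide ((z + p) / (q : ℤ) = z / q + 1)

lemma mechLetter_add (p q : ℕ) (hq : 0 < q) (z m : ℤ) :
    mechLetter p q (z + q * m) = mechLetter p q z := by
  have hqz : (q : ℤ) ≠ 0 := by exact_mod_cast hq.ne'
  unfold mechLetter
  have e : z + q * m + p = z + p + q * m := by ring
  rw [e, Int.add_mul_ediv_left _ _ hqz, Int.add_mul_ediv_left _ _ hqz]
  congr 1
  apply propext
  constructor <;> intro h <;> linarith

lemma rot_exists (p q : ℕ) (hq : 0 < q) (hc : Nat.Coprime p q) (c c' : ℤ) :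
    ∃ j < q, (List.range q).map (fun i : ℕ => mechLetter p q (c + i * p)) =
      ((List.range q).map (fun i : ℕ => mechLetter p q (c' + i * p))).rotate j := by
  have hqz : (0 : ℤ) < q := by exact_mod_cast hq
  have hcz : IsCoprime (p : ℤ) (q : ℤ) := Nat.isCoprime_iff_coprime.2 hc
  obtain ⟨a, b, hab⟩ := hcz
  have hj0 := Int.emod_nonneg ((c - c') * a) hqz.ne'
  have hj1 := Int.emod_lt_of_pos ((c - c') * a) hqz
  have hj2 := Int.emod_add_mul_ediv ((c - c') * a) q
  obtain ⟨j, hj⟩ := Int.eq_ofNat_of_zero_le hj0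
  rw [hj] at hj1 hj2
  refine ⟨j, by exact_mod_cast hj1, ?_⟩
  apply List.ext_getElem
  · simp
  intro i h1 h2
  simp only [List.getElem_map, List.getElem_range, List.getElem_rotate, List.length_map,
    List.length_range]
  have hm : (((i + j) % q : ℕ) : ℤ) + q * (((i + j) / q : ℕ) : ℤ) = i + j := by
    exact_mod_cast Nat.mod_add_div (i + j) q
  set r : ℤ := (((i + j) % q : ℕ) : ℤ)
  set s : ℤ := (((i + j) / q : ℕ) : ℤ)
  set t : ℤ := (c - c') * a / q
  have : c + i * p = c' + r * p + q * (s * p + t * p + (c - c') * b) := by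
    linear_combination (-(p : ℤ)) * hm - (c - c') * hab - (p : ℤ) * hj2
  rw [this, mechLetter_add p q hq]

lemma fib_approx (k : ℕ) : (Nat.fib (k + 2) : ℝ) *
    |(Nat.fib (k + 2) : ℝ) * goldenOmega - Nat.fib (k + 1)| < 1 := by
  have hb := om_bounds
  have e : (Nat.fib (k + 2) : ℝ) * goldenOmega - Nat.fib (k + 1) = - (-goldenOmega) ^ (k + 2) := by
    rw [fib_om (k + 1)]; ring
  rw [e, abs_neg, abs_pow, abs_neg, abs_of_pos (by linarith)]
  cases k with
  | zero =>
    have := om_sq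
    have e2 : (Nat.fib (0 + 2) : ℝ) = 1 := by norm_num
    rw [e2, zero_add, this]
    linarith
  | succ k =>
    have := fib_pow_lt k
    have e : k + 1 + 2 = k + 3 := by ring
    rw [e]
    linarith

lemma word_mech (k : ℕ) (y : ℝ)
    (hy : ⌊y + Nat.fib (k + 2) * goldenOmega⌋ = ⌊y⌋ + Nat.fib (k + 1)) :
    ∃ c : ℤ, ∀ i < Nat.fib (k + 2),
      decide (⌊y + ((i : ℝ) + 1) * goldenOmega⌋ = ⌊y + (i : ℝ) * goldenOmega⌋ + 1) =
        mechLetter (Nat.fib (k + 1)) (Nat.fib (k + 2)) (c + i * Nat.fib (k + 1)) := by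
  obtain ⟨c, hc⟩ := exists_mech y goldenOmega (Nat.fib (k + 1)) (Nat.fib (k + 2))
    (Nat.fib_pos.2 (by omega)) (Nat.fib_coprime_fib_succ _) (fib_approx k) hy
  refine ⟨c, fun i hi => ?_⟩
  have a1 := hc i hi.le
  have a2 := hc (i + 1) hi
  push_cast at a2
  unfold mechLetter
  rw [a1, a2]
  have e : c + ((i : ℤ) + 1) * (Nat.fib (k + 1) : ℤ) = c + i * Nat.fib (k + 1) + Nat.fib (k + 1) := by
    ring
  rw [e]

lemma tTheta_eq (θ : ℝ) (k : ℕ) : tTheta θ k = (List.range (Nat.fib (k + 2))).map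
    fun i : ℕ => vTheta θ (-(Nat.fib (k + 2) : ℤ) + 1 + (i : ℤ)) := by
  unfold tTheta
  simp [List.bind_eq_flatMap, List.pure_def, ← List.map_eq_flatMap]

lemma rot_of_floor (θ : ℝ) (k : ℕ)
    (h : ⌊θ + goldenOmega + (-goldenOmega) ^ (k + 2)⌋ = ⌊θ + goldenOmega⌋) :
    ∃ i < Nat.fib (k + 2), tTheta θ k = (fibWord k).rotate i := by
  have hb := om_bounds
  have hq : 0 < Nat.fib (k + 2) := Nat.fib_pos.2 (by omega)
  have hf := fib_om (k + 1)
  have hf' : (Nat.fib (k + 2) : ℝ) * goldenOmega = Nat.fib (k + 1) - (-goldenOmega) ^ (k + 2) := hf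
  obtain ⟨c, hc⟩ := word_mech k (θ + goldenOmega - Nat.fib (k + 2) * goldenOmega) (by
    have e1 : θ + goldenOmega - Nat.fib (k + 2) * goldenOmega =
        (θ + goldenOmega + (-goldenOmega) ^ (k + 2)) - ((Nat.fib (k + 1) : ℤ) : ℝ) := by
      push_cast; linear_combination -hf'
    rw [sub_add_cancel, e1, Int.floor_sub_intCast, h]; ring)
  obtain ⟨c', hc'⟩ := word_mech k goldenOmega (by
    have e1 : goldenOmega + Nat.fib (k + 2) * goldenOmega =
        (goldenOmega - (-goldenOmega) ^ (k + 2)) + ((Nat.fib (k + 1) : ℤ) : ℝ) := by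
      push_cast; linear_combination hf'
    rw [e1, Int.floor_add_intCast]
    congr 1
    have habs : |(-goldenOmega) ^ (k + 2)| ≤ 1 - goldenOmega := by
      rw [abs_pow, abs_neg, abs_of_pos (by linarith), ← om_sq]
      exact pow_le_pow_of_le_one (by linarith) (by linarith) (by omega)
    have hlt : goldenOmega - (-goldenOmega) ^ (k + 2) < 1 := by
      rcases Nat.eq_zero_or_pos k with h0 | h0
      · subst h0
        have := om_sq
        norm_num
        linarith
      · obtain ⟨m, rfl⟩ := Nat.exists_eq_add_of_le h0
        have e : Nat.succ 0 + m + 2 = m + 3 := by omega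
        rw [e]
        have h3 := om_pow_le m
        have : |(-goldenOmega) ^ (m + 3)| = goldenOmega ^ (m + 3) := by
          rw [abs_pow, abs_neg, abs_of_pos (by linarith)]
        have := neg_abs_le ((-goldenOmega) ^ (m + 3))
        linarith
    have := le_abs_self ((-goldenOmega) ^ (k + 2))
    rw [(Int.floor_eq_iff (z := 0)).2, (Int.floor_eq_iff (z := 0)).2] <;> push_cast <;>
      constructor <;> linarith)
  have T : tTheta θ k = (List.range (Nat.fib (k + 2))).map
      (fun i : ℕ => mechLetter (Nat.fib (k + 1)) (Nat.fib (k + 2)) (c + i * Nat.fib (k + 1))) := by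
    rw [tTheta_eq]
    apply List.map_congr_left
    intro i hi
    rw [← hc i (List.mem_range.1 hi), vTheta_iff']
    · push_cast; ring
    · push_cast; ring
  have S : fibWord k = (List.range (Nat.fib (k + 2))).map
      (fun i : ℕ => mechLetter (Nat.fib (k + 1)) (Nat.fib (k + 2)) (c' + i * Nat.fib (k + 1))) := by
    rw [fibWord_eq]
    apply List.map_congr_left
    intro i hi
    rw [← hc' i (List.mem_range.1 hi), vTheta_iff']
    · push_cast; ring
    · push_cast; ring
  rw [T, S]
  have hcop : Nat.Coprime (Nat.fib (k + 1)) (Nat.fib (k + 2)) := Nat.fib_coprime_fib_succ _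
  have hrot := rot_exists _ _ hq hcop c c'
  exact hrot

/-- For every `θ ∈ ℝ`, either for all odd `k ≥ 1` the word `t_k^θ` is a cyclic rotation of
`s_k`, or for all even `k ≥ 0` the word `t_k^θ` is a cyclic rotation of `s_k`.
(Here `u.rotate i = u_{i+1} ... u_n u_1 ... u_i` and `F_k = Nat.fib (k + 2)`.) -/
theorem tTheta_cyclic_rotation (θ : ℝ) :
    (∀ k, Odd k → ∃ i < Nat.fib (k + 2), tTheta θ k = (fibWord k).rotate i) ∨
    (∀ k, Even k → ∃ i < Nat.fib (k + 2), tTheta θ k = (fibWord k).rotate i) := by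
  have hb := om_bounds
  have hs := om_sq
  have h1 := Int.floor_add_fract (θ + goldenOmega)
  have h2 := Int.fract_lt_one (θ + goldenOmega)
  have h3 := Int.fract_nonneg (θ + goldenOmega)
  rcases le_or_gt 0.2363 (Int.fract (θ + goldenOmega)) with h | h
  · left
    intro k hk
    apply rot_of_floor
    have hodd : Odd (k + 2) := by
      obtain ⟨m, rfl⟩ := hk
      exact ⟨m + 1, by ring⟩
    obtain ⟨m, rfl⟩ : ∃ m, k = m + 1 := ⟨k - 1, by have := hk.pos; omega⟩
    have hp := om_pow_le m
    have hpos : 0 < goldenOmega ^ (m + 1 + 2) := pow_pos (by linarith) _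
    have e : goldenOmega ^ (m + 1 + 2) = goldenOmega ^ (m + 3) := rfl
    rw [hodd.neg_pow, Int.floor_eq_iff]
    constructor <;> linarith
  · right
    intro k hk
    apply rot_of_floor
    have heven : Even (k + 2) := by
      obtain ⟨m, rfl⟩ := hk
      exact ⟨m + 1, by ring⟩
    have hp : goldenOmega ^ (k + 2) ≤ goldenOmega ^ 2 :=
      pow_le_pow_of_le_one (by linarith) (by linarith) (by omega)
    have hpos : 0 < goldenOmega ^ (k + 2) := pow_pos (by linarith) _
    rw [heven.neg_pow, Int.floor_eq_iff]
    constructor <;> linarith
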